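/- arXiv:2603.00125 — 4 statements merged into one kernel-verified Lean document; each statement's English description precedes it below -/
import Mathlib

section
/- Let X₀ ⊆ ℝⁿ be open and let F = (f₁, …, f_p) with each fᵢ : X₀ → ℝ LLC be V-invex on X₀. Then a point u ∈ X₀ is a weakly Pareto optimal solution of F on X₀ if and only if there exist τ ∈ ℝᵖ with τᵢ ≥ 0 for all i and τ ≠ 0, and subgradients ξᵢ ∈ ∂_C fᵢ(u) (i = 1, …, p) such that Σᵢ₌₁ᵖ τᵢ·ξᵢ = 0. -/
/-!
Sufficiency is immediate: if `x` improved every objective strictly, V-invexity would give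
`⟪ξ i, η x u⟫ < 0` for all `i`, contradicting `∑ τ i • ξ i = 0` with `τ ≥ 0`, `τ ≠ 0`.

Necessity is an argument of Fritz John type. The Clarke derivatives `f i°(u; ·)` are sublinear
(`clarkeDir_smul`, `clarkeDir_add_le`), and a common direction `d` with `f i°(u; d) < 0` for all `i`
would be a common descent direction (`eventually_lt_of_clarkeDir_neg`). At a weakly Pareto optimal
point no such `d` exists, so separating `0` from the open convex set
`{y | ∃ d, ∀ i, f i°(u; d) < y i}` yields `τ ≥ 0`, `τ ≠ 0` with `∑ τ i * f i°(u; d) ≥ 0` for every `d`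
(`exists_weights`). The zero functional on the diagonal of `E ^ p` is thus dominated by the sublinear
map `(d i) ↦ ∑ τ i * f i°(u; d i)`; a Hahn-Banach extension splits into components, which are the
vectors `τ i • ξ i` (`exists_split`).
-/

open Filter Topology RealInnerProductSpace

variable {n : ℕ}

local notation "E" => EuclideanSpace ℝ (Fin n)

/-- Clarke generalized directional derivative of `f` at `x` in direction `d`. -/
noncomputable def clarkeDir (f : E → ℝ) (x d : E) : ℝ :=
  Filter.limsup (fun p : E × ℝ => (f (p.1 + p.2 • d) - f p.1) / p.2)
    ((𝓝 x) ×ˢ (𝓝[>] (0 : ℝ)))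

/-- Clarke subdifferential of `f` at `x`. -/
def clarkeSubdiff (f : E → ℝ) (x : E) : Set E :=
  {ξ | ∀ d : E, ⟪ξ, d⟫ ≤ clarkeDir f x d}

/-- `f` is locally Lipschitz continuous on `s`. -/
def LLCOn (f : E → ℝ) (s : Set E) : Prop :=
  ∀ x ∈ s, ∃ K : NNReal, ∃ t ∈ 𝓝 x, LipschitzOnWith K f t

/-- Locally Lipschitz at the single point `x`. -/
def LipAt (f : E → ℝ) (x : E) : Prop :=
  ∃ K : NNReal, ∃ t ∈ 𝓝 x, LipschitzOnWith K f t

/-- The base point `y` and the step `t` of the Clarke difference quotient may be moved to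
`y + t • e` and `c * t`. -/
lemma tendsto_shift (x e : E) {c : ℝ} (hc : 0 < c) :
    Tendsto (fun p : E × ℝ => (p.1 + p.2 • e, c * p.2)) (𝓝 x ×ˢ 𝓝[>] (0 : ℝ))
      (𝓝 x ×ˢ 𝓝[>] (0 : ℝ)) := by
  have h1 : Tendsto (fun p : E × ℝ => p.1) (𝓝 x ×ˢ 𝓝[>] (0 : ℝ)) (𝓝 x) := tendsto_fst
  have h2 : Tendsto (fun p : E × ℝ => p.2) (𝓝 x ×ˢ 𝓝[>] (0 : ℝ)) (𝓝[>] 0) := tendsto_snd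
  have h2' := h2.mono_right nhdsWithin_le_nhds
  refine Tendsto.prodMk ?_ (tendsto_nhdsWithin_iff.2 ⟨?_, ?_⟩)
  · simpa using h1.add (h2'.smul_const e)
  · simpa using h2'.const_mul c
  · filter_upwards [h2.eventually self_mem_nhdsWithin] with p hp
    exact mul_pos hc hp

lemma eventually_pos (x : E) : ∀ᶠ p : E × ℝ in 𝓝 x ×ˢ 𝓝[>] (0 : ℝ), 0 < p.2 :=
  tendsto_snd.eventually self_mem_nhdsWithin

/-- Boundedness of the difference quotients; without it the real-valued `limsup` in `clarkeDir`
would be a junk value. -/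
lemma LipAt.bounded {f : E → ℝ} {x : E} (h : LipAt f x) (d : E) :
    ∃ M : ℝ, ∀ᶠ p : E × ℝ in 𝓝 x ×ˢ 𝓝[>] (0 : ℝ),
      |(f (p.1 + p.2 • d) - f p.1) / p.2| ≤ M := by
  obtain ⟨K, t, ht, hK⟩ := h
  refine ⟨K * ‖d‖, ?_⟩
  have h1 : ∀ᶠ p : E × ℝ in 𝓝 x ×ˢ 𝓝[>] (0 : ℝ), p.1 ∈ t := tendsto_fst.eventually ht
  have h2 : ∀ᶠ p : E × ℝ in 𝓝 x ×ˢ 𝓝[>] (0 : ℝ), p.1 + p.2 • d ∈ t :=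
    (tendsto_fst.comp (tendsto_shift x d one_pos)).eventually ht
  filter_upwards [h1, h2, eventually_pos x] with p hp1 hp2 hp3
  have := hK.dist_le_mul _ hp2 _ hp1
  rw [Real.dist_eq, dist_eq_norm, add_sub_cancel_left, norm_smul, Real.norm_of_nonneg hp3.le] at this
  rw [abs_div, abs_of_pos hp3, div_le_iff₀ hp3]
  linarith

lemma LipAt.eventually_lt {f : E → ℝ} {x d : E} (h : LipAt f x) {a : ℝ} (ha : clarkeDir f x d < a) :
    ∀ᶠ p : E × ℝ in 𝓝 x ×ˢ 𝓝[>] (0 : ℝ), (f (p.1 + p.2 • d) - f p.1) / p.2 < a := by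
  obtain ⟨M, hM⟩ := h.bounded d
  exact Filter.eventually_lt_of_limsup_lt ha
    (isBoundedUnder_of_eventually_le (a := M) (hM.mono fun p hp => (abs_le.1 hp).2))

lemma LipAt.clarkeDir_le {f : E → ℝ} {x d : E} (h : LipAt f x) {a : ℝ}
    (ha : ∀ᶠ p : E × ℝ in 𝓝 x ×ˢ 𝓝[>] (0 : ℝ), (f (p.1 + p.2 • d) - f p.1) / p.2 ≤ a) :
    clarkeDir f x d ≤ a := by
  obtain ⟨M, hM⟩ := h.bounded d
  exact Filter.limsup_le_of_le (IsBoundedUnder.isCoboundedUnder_le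
    (isBoundedUnder_of_eventually_ge (a := -M) (hM.mono fun p hp => (abs_le.1 hp).1))) ha

lemma clarkeDir_smul_le {f : E → ℝ} {x : E} (h : LipAt f x) {c : ℝ} (hc : 0 < c) (d : E) :
    clarkeDir f x (c • d) ≤ c * clarkeDir f x d := by
  refine le_of_forall_pos_le_add fun ε hε => ?_
  have h1 := h.eventually_lt (d := d) (a := clarkeDir f x d + ε / c) (by linarith [div_pos hε hc])
  have h2 := (tendsto_shift x 0 hc).eventually h1
  refine h.clarkeDir_le ?_
  filter_upwards [h2, eventually_pos x] with p hp hp3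
  simp only [smul_zero, add_zero] at hp
  rw [div_lt_iff₀ (by positivity)] at hp
  rw [div_le_iff₀ hp3, smul_smul, mul_comm p.2 c]
  refine hp.le.trans (le_of_eq ?_)
  field_simp

lemma clarkeDir_smul {f : E → ℝ} {x : E} (h : LipAt f x) {c : ℝ} (hc : 0 < c) (d : E) :
    clarkeDir f x (c • d) = c * clarkeDir f x d := by
  refine le_antisymm (clarkeDir_smul_le h hc d) ?_
  have := clarkeDir_smul_le h (inv_pos.2 hc) (c • d)
  rwa [smul_smul, inv_mul_cancel₀ hc.ne', one_smul, ← div_eq_inv_mul, le_div_iff₀' hc] at this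

lemma clarkeDir_add_le {f : E → ℝ} {x : E} (h : LipAt f x) (d e : E) :
    clarkeDir f x (d + e) ≤ clarkeDir f x d + clarkeDir f x e := by
  refine le_of_forall_pos_le_add fun ε hε => ?_
  have h1 := h.eventually_lt (d := d) (a := clarkeDir f x d + ε / 2) (by linarith)
  have h2 := (tendsto_shift x d one_pos).eventually
    (h.eventually_lt (d := e) (a := clarkeDir f x e + ε / 2) (by linarith))
  refine h.clarkeDir_le ?_
  filter_upwards [h1, h2] with p hp1 hp2
  -- the quotient in direction `d + e` splits at the intermediate point `p.1 + p.2 • d`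
  have : (f (p.1 + p.2 • (d + e)) - f p.1) / p.2 =
      (f (p.1 + p.2 • d) - f p.1) / p.2 +
        (f (p.1 + p.2 • d + p.2 • e) - f (p.1 + p.2 • d)) / p.2 := by
    rw [smul_add, ← add_assoc]; ring
  rw [one_mul] at hp2
  rw [this]
  linarith

lemma clarkeDir_zero (f : E → ℝ) (x : E) : clarkeDir f x 0 = 0 := by
  simp [clarkeDir]

lemma eventually_lt_of_clarkeDir_neg {f : E → ℝ} {x d : E} (h : LipAt f x)
    (hd : clarkeDir f x d < 0) : ∀ᶠ t : ℝ in 𝓝[>] (0 : ℝ), f (x + t • d) < f x := by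
  have hT : Tendsto (fun t : ℝ => (x, t)) (𝓝[>] (0 : ℝ)) (𝓝 x ×ˢ 𝓝[>] (0 : ℝ)) :=
    tendsto_const_nhds.prodMk tendsto_id
  filter_upwards [hT.eventually (h.eventually_lt hd), self_mem_nhdsWithin] with t ht ht0
  rw [div_lt_iff₀ ht0] at ht
  linarith

lemma exists_subgradient_of_le {f : E → ℝ} {x : E} (g : E →ₗ[ℝ] ℝ)
    (hg : ∀ d, g d ≤ clarkeDir f x d) : ∃ ξ ∈ clarkeSubdiff f x, ∀ d, ⟪ξ, d⟫ = g d := by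
  have key : ∀ d, ⟪(InnerProductSpace.toDual ℝ E).symm g.toContinuousLinearMap, d⟫ = g d := by
    intro d
    rw [InnerProductSpace.toDual_symm_apply]
    rfl
  exact ⟨_, fun d => (key d).trans_le (hg d), key⟩

lemma clarkeSubdiff_nonempty {f : E → ℝ} {x : E} (h : LipAt f x) :
    (clarkeSubdiff f x).Nonempty := by
  obtain ⟨g, -, hg⟩ := exists_extension_of_le_sublinear (⟨⊥, 0⟩ : E →ₗ.[ℝ] ℝ) (clarkeDir f x)
    (fun c hc d => clarkeDir_smul h hc d) (clarkeDir_add_le h) (by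
      rintro ⟨y, hy⟩
      obtain rfl := (Submodule.mem_bot ℝ).1 hy
      simp [clarkeDir_zero])
  obtain ⟨ξ, hξ, -⟩ := exists_subgradient_of_le g hg
  exact ⟨ξ, hξ⟩

/-- A theorem of the alternative for finitely many sublinear functions, obtained by separating
`0` from the open convex set `{y | ∃ d, ∀ i, q i d < y i}`. -/
lemma exists_weights {p : ℕ} (q : Fin p → E → ℝ) (h0 : ∀ i, q i 0 = 0)
    (hsmul : ∀ i, ∀ c : ℝ, 0 < c → ∀ d, q i (c • d) = c * q i d)
    (hadd : ∀ i d e, q i (d + e) ≤ q i d + q i e)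
    (hq : ¬ ∃ d, ∀ i, q i d < 0) :
    ∃ τ : Fin p → ℝ, (∀ i, 0 ≤ τ i) ∧ τ ≠ 0 ∧ ∀ d, 0 ≤ ∑ i, τ i * q i d := by
  let C : Set (Fin p → ℝ) := {y | ∃ d, ∀ i, q i d < y i}
  have hCo : IsOpen C := by
    have : C = ⋃ d, Set.pi Set.univ fun i => Set.Ioi (q i d) := by
      ext y; simp [C]
    rw [this]
    exact isOpen_iUnion fun d => isOpen_set_pi Set.finite_univ fun i _ => isOpen_Ioi
  have hCc : Convex ℝ C := by
    refine convex_iff_forall_pos.2 ?_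
    rintro y ⟨d, hd⟩ z ⟨e, he⟩ a b ha hb -
    refine ⟨a • d + b • e, fun i => (hadd i _ _).trans_lt ?_⟩
    rw [hsmul i a ha, hsmul i b hb]
    exact add_lt_add (mul_lt_mul_of_pos_left (hd i) ha) (mul_lt_mul_of_pos_left (he i) hb)
  have h0C : (0 : Fin p → ℝ) ∉ C := fun ⟨d, hd⟩ => hq ⟨d, hd⟩
  obtain ⟨g, hg⟩ := geometric_hahn_banach_open_point hCc hCo h0C
  rw [map_zero] at hg
  let τ : Fin p → ℝ := fun i => -g (Pi.single i 1)
  have hτ : ∀ y ∈ C, 0 < ∑ i, τ i * y i := by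
    intro y hy
    have h1 : g y = ∑ i, y i * g (Pi.single i 1) := by
      conv_lhs => rw [pi_eq_sum_univ' y]
      simp [map_sum]
    have h2 : ∑ i, τ i * y i = - g y := by
      rw [h1, ← Finset.sum_neg_distrib]
      exact Finset.sum_congr rfl fun i _ => by simp only [τ]; ring
    linarith [hg y hy]
  have hone : 0 < ∑ i, τ i := by
    simpa using hτ 1 ⟨0, fun i => by simp [h0]⟩
  refine ⟨τ, fun i => ?_, ?_, fun d => ?_⟩
  · -- `1 + M • e_i ∈ C` for every `M ≥ 0`, which bounds `τ i` from below by `-(∑ τ) / M`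
    by_contra! hi
    have hM : 0 ≤ (∑ j, τ j) / (-τ i) := div_nonneg hone.le (by linarith)
    have := hτ (fun j => 1 + Pi.single (M := fun _ => ℝ) i ((∑ j, τ j) / (-τ i)) j)
      ⟨0, fun j => by
        rw [h0]
        by_cases hj : j = i
        · subst hj; simp only [Pi.single_eq_same]; linarith
        · simp [Pi.single_eq_of_ne hj]⟩
    simp only [mul_add, mul_one, Finset.sum_add_distrib, Pi.single_apply, mul_ite, mul_zero,
      Finset.sum_ite_eq', Finset.mem_univ, if_true] at this
    have h3 : τ i * ((∑ j, τ j) / (-τ i)) = -∑ j, τ j := by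
      have := hi.ne
      field_simp
    linarith
  · intro h
    rw [h] at hone
    simp at hone
  · by_contra! hd
    have := hτ (fun i => q i d + (-∑ i, τ i * q i d) / ∑ i, τ i)
      ⟨d, fun i => by linarith [div_pos (neg_pos.2 hd) hone]⟩
    simp only [mul_add, Finset.sum_add_distrib, ← Finset.sum_mul] at this
    rw [mul_div_cancel₀ _ hone.ne'] at this
    linarith

/-- If `∑ q i` is nonnegative for sublinear `q i`, then the zero functional splits as a sum of
linear functionals dominated by the `q i`. -/
lemma exists_split {p : ℕ} (q : Fin p → E → ℝ)
    (hsmul : ∀ i, ∀ c : ℝ, 0 < c → ∀ d, q i (c • d) = c * q i d)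
    (hadd : ∀ i d e, q i (d + e) ≤ q i d + q i e)
    (hq : ∀ d, 0 ≤ ∑ i, q i d) :
    ∃ g : Fin p → E →ₗ[ℝ] ℝ, (∀ i d, g i d ≤ q i d) ∧ ∀ d, ∑ i, g i d = 0 := by
  let Δ : E →ₗ[ℝ] (Fin p → E) := LinearMap.pi fun _ => LinearMap.id
  obtain ⟨G, hG, hGle⟩ := exists_extension_of_le_sublinear
    (⟨LinearMap.range Δ, 0⟩ : (Fin p → E) →ₗ.[ℝ] ℝ) (fun v => ∑ i, q i (v i))
    (fun c hc v => by
      rw [Finset.mul_sum]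
      exact Finset.sum_congr rfl fun i _ => hsmul i c hc _)
    (fun v w => by
      rw [← Finset.sum_add_distrib]
      exact Finset.sum_le_sum fun i _ => hadd i _ _)
    (by
      rintro ⟨_, d, rfl⟩
      exact hq d)
  have hq0 : ∀ i, q i 0 = 0 := fun i => by
    have := hsmul i 2 two_pos 0
    rw [smul_zero] at this
    linarith
  refine ⟨fun i => G ∘ₗ LinearMap.single ℝ (fun _ => E) i, fun i d => ?_, fun d => ?_⟩
  · refine (hGle _).trans (le_of_eq ?_)
    rw [Finset.sum_eq_single i]
    · simp
    · intro j _ hj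
      simp [Pi.single_eq_of_ne hj, hq0]
    · simp
  · have h1 : G (Δ d) = 0 := hG ⟨Δ d, d, rfl⟩
    have h2 : Δ d = ∑ i, Pi.single i d := (Finset.univ_sum_single (Δ d)).symm
    rw [h2, map_sum] at h1
    exact h1

/-- A V-invex vector function `F = (f₁, …, f_p)` on an open set `X₀`:
`u` is weakly Pareto optimal iff some nonnegative nonzero multipliers and Clarke
subgradients sum to zero. -/
theorem weaklyPareto_iff_multipliers
    {p : ℕ} (hp : 0 < p) (X₀ : Set E) (hX₀ : IsOpen X₀)
    (f : Fin p → E → ℝ) (hLLC : ∀ i, LLCOn (f i) X₀)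
    (η : E → E → E) (β : Fin p → E → E → ℝ)
    (hβ : ∀ i, ∀ x ∈ X₀, ∀ u ∈ X₀, 0 < β i x u)
    (hVinvex : ∀ x ∈ X₀, ∀ u ∈ X₀, ∀ i, ∀ ξ ∈ clarkeSubdiff (f i) u,
      β i x u * ⟪ξ, η x u⟫ ≤ f i x - f i u)
    (u : E) (hu : u ∈ X₀) :
    (¬ ∃ x ∈ X₀, ∀ i, f i x < f i u) ↔
      ∃ τ : Fin p → ℝ, (∀ i, 0 ≤ τ i) ∧ τ ≠ 0 ∧
        ∃ ξ : Fin p → E, (∀ i, ξ i ∈ clarkeSubdiff (f i) u) ∧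
          ∑ i, τ i • ξ i = 0 := by
  have hL : ∀ i, LipAt (f i) u := fun i => hLLC i u hu
  constructor
  · intro hopt
    have hnod : ¬ ∃ d, ∀ i, clarkeDir (f i) u d < 0 := by
      rintro ⟨d, hd⟩
      have h1 : ∀ᶠ t : ℝ in 𝓝[>] (0 : ℝ), ∀ i, f i (u + t • d) < f i u :=
        eventually_all.2 fun i => eventually_lt_of_clarkeDir_neg (hL i) (hd i)
      have h2 : ∀ᶠ t : ℝ in 𝓝[>] (0 : ℝ), u + t • d ∈ X₀ := by
        have hc : Tendsto (fun t : ℝ => u + t • d) (𝓝 0) (𝓝 u) := by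
          have : Continuous fun t : ℝ => u + t • d := by fun_prop
          simpa using this.tendsto 0
        exact (hc.mono_left nhdsWithin_le_nhds).eventually (hX₀.mem_nhds hu)
      obtain ⟨t, ht1, ht2⟩ := (h1.and h2).exists
      exact hopt ⟨_, ht2, ht1⟩
    obtain ⟨τ, hτ0, hτne, hτ⟩ := exists_weights (fun i => clarkeDir (f i) u)
      (fun i => clarkeDir_zero _ _) (fun i c hc d => clarkeDir_smul (hL i) hc d)
      (fun i => clarkeDir_add_le (hL i)) hnod
    obtain ⟨g, hg, hgsum⟩ := exists_split (fun i d => τ i * clarkeDir (f i) u d)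
      (fun i c hc d => by simp only [clarkeDir_smul (hL i) hc d]; ring)
      (fun i d e => by
        rw [← mul_add]
        exact mul_le_mul_of_nonneg_left (clarkeDir_add_le (hL i) d e) (hτ0 i)) hτ
    have hξ : ∀ i, ∃ ξ ∈ clarkeSubdiff (f i) u, ∀ d, τ i * ⟪ξ, d⟫ = g i d := by
      intro i
      rcases (hτ0 i).eq_or_lt with hi | hi
      · -- a linear functional that is nowhere positive vanishes, so any subgradient will do
        obtain ⟨ξ, hξ⟩ := clarkeSubdiff_nonempty (hL i)
        refine ⟨ξ, hξ, fun d => ?_⟩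
        have h1 := hg i d
        have h2 := hg i (-d)
        simp only [← hi, zero_mul, map_neg] at h1 h2 ⊢
        linarith
      · obtain ⟨ξ, hξ, h⟩ := exists_subgradient_of_le (f := f i) (x := u) ((τ i)⁻¹ • g i)
          (fun d => by
            rw [LinearMap.smul_apply, smul_eq_mul, ← div_eq_inv_mul, div_le_iff₀' hi]
            exact hg i d)
        refine ⟨ξ, hξ, fun d => ?_⟩
        rw [h, LinearMap.smul_apply, smul_eq_mul, mul_inv_cancel_left₀ hi.ne']
    choose ξ hξmem hξ using hξ
    refine ⟨τ, hτ0, hτne, ξ, hξmem, ext_inner_right ℝ fun d => ?_⟩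
    rw [sum_inner, inner_zero_left, ← hgsum d]
    exact Finset.sum_congr rfl fun i _ => by rw [real_inner_smul_left, hξ]
  · rintro ⟨τ, hτ0, hτne, ξ, hξ, hsum⟩ ⟨x, hx, hlt⟩
    have hneg : ∀ i, ⟪ξ i, η x u⟫ < 0 := fun i => by
      have := hVinvex x hx u hu i (ξ i) (hξ i)
      by_contra! h
      linarith [mul_nonneg (hβ i x hx u hu).le h, hlt i]
    obtain ⟨j, hj⟩ := Function.ne_iff.1 hτne
    have hj' : 0 < τ j := (hτ0 j).lt_of_ne' hj
    have h1 : ∑ i, τ i * ⟪ξ i, η x u⟫ = 0 := by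
      have := congrArg (fun v => ⟪v, η x u⟫) hsum
      simpa only [sum_inner, inner_zero_left, real_inner_smul_left] using this
    have h2 : ∑ i, τ i * ⟪ξ i, η x u⟫ < 0 :=
      Finset.sum_neg' (fun i _ => mul_nonpos_of_nonneg_of_nonpos (hτ0 i) (hneg i).le)
        ⟨j, Finset.mem_univ _, mul_neg_of_pos_of_neg hj' (hneg j)⟩
    linarith
end

section
/- Let F = (f₁, …, f_p) where each fᵢ : ℝⁿ → ℝ is convex, and let the feasible set X ⊆ ℝⁿ be convex. A point u ∈ X is weakly Pareto optimal for F on X if and only if there exists a fixed weight vector λ = (λ₁, …, λ_p) ∈ ℝᵖ with λᵢ ≥ 0 for all i and λ ≠ 0 such that Σᵢ₌₁ᵖ λᵢ·fᵢ(u) ≤ Σᵢ₌₁ᵖ λᵢ·fᵢ(x) for all x ∈ X (i.e., u minimizes the weighted sum Σᵢ λᵢ·fᵢ over X). -/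
/-!
If a weighted sum with nonnegative, nonzero weights is minimized at `u`, then no `x ∈ X` can improve
every objective strictly, since some weight is positive.

Conversely, the set `T = {y | ∃ x ∈ X, ∀ i, f i x - f i u < y i}` in `ℝᵖ` is open, and convex because
`X` and all `f i` are. Weak Pareto optimality of `u` says exactly that `0 ∉ T`, so Hahn–Banach gives
a linear functional `g` positive on `T`. Its coordinates are the weights: they are nonnegative
because `T` is stable under increasing coordinates, not all zero because `g` is positive on the
nonempty set `T`, and the minimality inequality holds because `(f i x - f i u)ᵢ` lies in the
closure of `T` for every `x ∈ X`.
-/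

variable {n : ℕ}

local notation "E" => EuclideanSpace ℝ (Fin n)

/-- Convex case: u ∈ X is weakly Pareto optimal for F = (f₁,…,f_p) on the convex set X
iff u minimizes a fixed nonnegative, nonzero weighted sum of the objectives over X. -/
theorem weaklyPareto_iff_weighted_sum_min
    {p : ℕ} (hp : 0 < p) (f : Fin p → E → ℝ)
    (hf : ∀ i, ConvexOn ℝ Set.univ (f i))
    (X : Set E) (hX : Convex ℝ X) (u : E) (hu : u ∈ X) :
    (¬ ∃ x ∈ X, ∀ i, f i x < f i u) ↔
      ∃ lam : Fin p → ℝ, (∀ i, 0 ≤ lam i) ∧ lam ≠ 0 ∧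
        ∀ x ∈ X, ∑ i, lam i * f i u ≤ ∑ i, lam i * f i x := by
  constructor
  · intro h
    let T : Set (Fin p → ℝ) := {y | ∃ x ∈ X, ∀ i, f i x - f i u < y i}
    have hTopen : IsOpen T := by
      have hT : T = ⋃ x ∈ X, ⋂ i, {y : Fin p → ℝ | f i x - f i u < y i} := by
        ext y
        simp [T]
      rw [hT]
      exact isOpen_biUnion fun x _ => isOpen_iInter_of_finite fun i =>
        isOpen_lt continuous_const (continuous_apply i)
    have hTconv : Convex ℝ T := by
      rintro y ⟨x, hx, hxy⟩ z ⟨w, hw, hwz⟩ a b ha hb hab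
      refine ⟨a • x + b • w, hX hx hw ha hb hab, fun i => ?_⟩
      have hconv := (hf i).2 (Set.mem_univ x) (Set.mem_univ w) ha hb hab
      have hlt : a * (f i x - f i u) + b * (f i w - f i u) < a * y i + b * z i := by
        rcases ha.eq_or_lt with rfl | ha'
        · obtain rfl : b = 1 := by linarith
          simpa using hwz i
        · exact add_lt_add_of_lt_of_le (mul_lt_mul_of_pos_left (hxy i) ha')
            (mul_le_mul_of_nonneg_left (hwz i).le hb)
      have hu' : a * f i u + b * f i u = f i u := by rw [← add_mul, hab, one_mul]
      simp only [smul_eq_mul, Pi.add_apply, Pi.smul_apply] at hconv ⊢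
      linarith
    have h0 : (0 : Fin p → ℝ) ∉ T := by
      rintro ⟨x, hx, hlt⟩
      exact h ⟨x, hx, fun i => sub_neg.1 (hlt i)⟩
    obtain ⟨g, hg⟩ := geometric_hahn_banach_point_open hTconv hTopen h0
    simp only [map_zero] at hg
    have hgsum (y : Fin p → ℝ) : g y = ∑ i, y i * g (Pi.single i 1) := by
      conv_lhs => rw [pi_eq_sum_univ' y]
      simp [map_sum]
    have hg1 : 0 < g 1 := hg 1 ⟨u, hu, fun i => by simp⟩
    refine ⟨fun i => g (Pi.single i 1), fun i => ?_, fun hzero => ?_, fun x hx => ?_⟩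
    · by_contra! hneg
      -- Moving from `1 ∈ T` in direction `i` stays in `T`; this step length makes `g` vanish.
      have hpos := hg (1 + (g 1 / -g (Pi.single i 1)) • Pi.single i 1) ⟨u, hu, fun j => by
        have hstep : 0 ≤ g 1 / -g (Pi.single i 1) := div_nonneg hg1.le (by linarith)
        have hsingle : (0 : ℝ) ≤ (Pi.single i 1 : Fin p → ℝ) j := by
          by_cases hij : j = i
          · subst hij
            simp
          · simp [hij]
        have := mul_nonneg hstep hsingle
        simp only [sub_self, Pi.add_apply, Pi.one_apply, Pi.smul_apply, smul_eq_mul]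
        linarith⟩
      rw [map_add, map_smul, smul_eq_mul, div_neg, neg_mul, div_mul_cancel₀ _ hneg.ne] at hpos
      linarith
    · have : g 1 = 0 := by
        rw [hgsum]
        exact Finset.sum_eq_zero fun i _ => by
          rw [show g (Pi.single i 1) = 0 from congrFun hzero i, mul_zero]
      linarith
    · have hnonneg : 0 ≤ g (fun i => f i x - f i u) := by
        refine le_of_forall_pos_lt_add fun ε hε => ?_
        have hpos := hg ((fun i => f i x - f i u) + (ε / g 1) • 1) ⟨x, hx, fun i => by
          have := div_pos hε hg1
          simpa using this⟩
        rwa [map_add, map_smul, smul_eq_mul, div_mul_cancel₀ _ hg1.ne'] at hpos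
      rw [hgsum] at hnonneg
      rw [← sub_nonneg, ← Finset.sum_sub_distrib]
      refine hnonneg.trans_eq (Finset.sum_congr rfl fun i _ => by ring)
  · rintro ⟨lam, hnonneg, hne, hmin⟩ ⟨x, hx, hlt⟩
    obtain ⟨j, hj⟩ := Function.ne_iff.1 hne
    refine (hmin x hx).not_gt (Finset.sum_lt_sum
      (fun i _ => mul_le_mul_of_nonneg_left (hlt i).le (hnonneg i)) ⟨j, Finset.mem_univ j, ?_⟩)
    exact mul_lt_mul_of_pos_left (hlt j) ((hnonneg j).lt_of_ne' hj)
end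

section
/- Let X₀ ⊆ ℝⁿ be open and let f : X₀ → ℝ be LLC. Suppose that for each u ∈ X₀ and each x ∈ X₀ the convex cone K_x(u) := ∪_{λ ≥ 0} (λ·∂_C f(u)) × {λ·(f(x) − f(u))} ⊆ ℝⁿ × ℝ is closed. Then f is invex on X₀ if and only if every stationary point of f (i.e., every u ∈ X₀ with 0 ∈ ∂_C f(u)) is a global minimizer of f on X₀. -/
/-!
The forward direction is the invexity inequality at `ξ = 0`. For the converse, `η x u = 0` works at
every stationary `u`, since then `f u ≤ f x`. Otherwise `0 ∉ ∂_C f(u)`. The Clarke subdifferential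
is an intersection of closed half-spaces, hence closed and convex, so some direction `v` and some
`c > 0` satisfy `⟪ξ, v⟫ > c` for all `ξ ∈ ∂_C f(u)`, and a sufficiently large negative multiple of
`v` serves as `η x u` (`exists_inner_le_of_zero_notMem`).
-/

open Filter Topology RealInnerProductSpace

variable {n : ℕ}

local notation "E" => EuclideanSpace ℝ (Fin n)

open scoped Pointwise

theorem isClosed_clarkeSubdiff (f : E → ℝ) (u : E) : IsClosed (clarkeSubdiff f u) := by
  have h : clarkeSubdiff f u = ⋂ d : E, {ξ : E | ⟪ξ, d⟫ ≤ clarkeDir f u d} := by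
    ext ξ
    simp [clarkeSubdiff]
  rw [h]
  exact isClosed_iInter fun d => isClosed_le (by fun_prop) continuous_const

theorem convex_clarkeSubdiff (f : E → ℝ) (u : E) : Convex ℝ (clarkeSubdiff f u) := by
  intro ξ hξ ζ hζ a b ha hb hab d
  rw [inner_add_left, real_inner_smul_left, real_inner_smul_left]
  calc a * ⟪ξ, d⟫ + b * ⟪ζ, d⟫
      ≤ a * clarkeDir f u d + b * clarkeDir f u d :=
        add_le_add (mul_le_mul_of_nonneg_left (hξ d) ha) (mul_le_mul_of_nonneg_left (hζ d) hb)
    _ = clarkeDir f u d := by rw [← add_mul, hab, one_mul]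

/-- At a non-stationary point every real number `r`, however negative, bounds the linear forms
`⟪ξ, ·⟫`, `ξ ∈ ∂_C f(u)`, uniformly from above at a suitable vector. -/
theorem exists_inner_le_of_zero_notMem (f : E → ℝ) (u : E)
    (h0 : (0 : E) ∉ clarkeSubdiff f u) (r : ℝ) :
    ∃ w : E, ∀ ξ ∈ clarkeSubdiff f u, ⟪ξ, w⟫ ≤ r := by
  obtain ⟨φ, c, hc, hφ⟩ := geometric_hahn_banach_point_closed
    (convex_clarkeSubdiff f u) (isClosed_clarkeSubdiff f u) h0
  rw [map_zero] at hc
  refine ⟨(-(|r| / c)) • (InnerProductSpace.toDual ℝ E).symm φ, fun ξ hξ => ?_⟩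
  rw [real_inner_smul_right, real_inner_comm, InnerProductSpace.toDual_symm_apply]
  have h1 : |r| / c * c ≤ |r| / c * φ ξ :=
    mul_le_mul_of_nonneg_left (hφ ξ hξ).le (by positivity)
  rw [div_mul_cancel₀ _ hc.ne'] at h1
  linarith [neg_abs_le r]

/-- Nonsmooth version: under the cone closedness condition, f is invex on X₀ iff every
stationary point (0 ∈ ∂_C f(u)) is a global minimizer of f on X₀. -/
theorem invex_iff_stationary_global_min
    (X₀ : Set E) (hX₀ : IsOpen X₀) (f : E → ℝ) (hLLC : LLCOn f X₀)
    (hK : ∀ u ∈ X₀, ∀ x ∈ X₀, IsClosed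
      (⋃ l ∈ Set.Ici (0 : ℝ), (l • clarkeSubdiff f u) ×ˢ ({l * (f x - f u)} : Set ℝ))) :
    (∃ η : E → E → E, ∀ x ∈ X₀, ∀ u ∈ X₀, ∀ ξ ∈ clarkeSubdiff f u,
        ⟪ξ, η x u⟫ ≤ f x - f u) ↔
    (∀ u ∈ X₀, (0 : E) ∈ clarkeSubdiff f u → ∀ x ∈ X₀, f u ≤ f x) := by
  constructor
  · rintro ⟨η, hη⟩ u hu h0 x hx
    have h := hη x hx u hu 0 h0
    rw [inner_zero_left] at h
    linarith
  · intro hmin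
    have key : ∀ x u : E, ∃ w : E, x ∈ X₀ → u ∈ X₀ →
        ∀ ξ ∈ clarkeSubdiff f u, ⟪ξ, w⟫ ≤ f x - f u := by
      intro x u
      by_cases h0 : (0 : E) ∈ clarkeSubdiff f u
      · refine ⟨0, fun hx hu ξ _ => ?_⟩
        rw [inner_zero_right]
        linarith [hmin u hu h0 x hx]
      · obtain ⟨w, hw⟩ := exists_inner_le_of_zero_notMem f u h0 (f x - f u)
        exact ⟨w, fun _ _ => hw⟩
    choose η hη using key
    exact ⟨η, fun x hx u hu => hη x u hx hu⟩
end

section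
/- Let X₀ ⊆ ℝⁿ be open and let f : X₀ → ℝ be differentiable on X₀. Then f is invex on X₀ (i.e., there exists η : X₀ × X₀ → ℝⁿ such that f(x) − f(u) ≥ ⟨∇f(u), η(x, u)⟩ for all x, u ∈ X₀) if and only if every stationary point of f (every u ∈ X₀ with ∇f(u) = 0) is a global minimizer of f on X₀. -/
open RealInnerProductSpace

variable {n : ℕ}

local notation "E" => EuclideanSpace ℝ (Fin n)

/-- Smooth case (Craven–Glover): a differentiable f is invex on the open set X₀ iff every
stationary point is a global minimizer of f on X₀. -/
theorem smooth_invex_iff_stationary_global_min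
    (X₀ : Set E) (hX₀ : IsOpen X₀) (f : E → ℝ)
    (hdiff : ∀ x ∈ X₀, DifferentiableAt ℝ f x) :
    (∃ η : E → E → E, ∀ x ∈ X₀, ∀ u ∈ X₀, ⟪gradient f u, η x u⟫ ≤ f x - f u) ↔
    (∀ u ∈ X₀, gradient f u = 0 → ∀ x ∈ X₀, f u ≤ f x) := by
  constructor
  · rintro ⟨η, h⟩ u hu hg x hx
    have := h x hx u hu
    rw [hg, inner_zero_left] at this
    linarith
  · intro h
    -- Where the gradient is nonzero, this multiple of it attains equality.
    refine ⟨fun x u => ((f x - f u) / ‖gradient f u‖ ^ 2) • gradient f u, fun x hx u hu => ?_⟩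
    by_cases hg : gradient f u = 0
    · rw [hg, inner_zero_left]
      linarith [h u hu hg x hx]
    · have hn : ‖gradient f u‖ ≠ 0 := norm_ne_zero_iff.mpr hg
      rw [real_inner_smul_right, real_inner_self_eq_norm_sq, div_mul_cancel₀ _ (pow_ne_zero 2 hn)]
end
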